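/- arXiv:2502.12394 — 4 statements merged into one kernel-verified Lean document; each statement's English description precedes it below -/
import Mathlib

section
/- For all integers n ≥ 1 and j ≥ 0, FO_{j,2}(n) = FD_{j,2}(n). -/
open Multiset Finset Filter

/-- A partition is encoded as a nonempty multiset of positive integers (its parts). -/
def IsPartition (M : Multiset ℕ) : Prop := M ≠ 0 ∧ ∀ x ∈ M, 0 < x

/-- The perimeter of a partition: (largest part) + (number of parts) - 1. -/
def perim (M : Multiset ℕ) : ℕ := M.sup + Multiset.card M - 1

/-- `rP n P` counts the partitions (of any sum) with perimeter `n` satisfying `P`. -/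
noncomputable def rP (n : ℕ) (P : Multiset ℕ → Prop) : ℕ :=
  Set.ncard {M : Multiset ℕ | IsPartition M ∧ perim M = n ∧ P M}

/-- `FO j n`: partitions with perimeter n having exactly j distinct even part values. -/
noncomputable def FO (j n : ℕ) : ℕ :=
  rP n (fun M => (M.toFinset.filter (fun v => Even v)).card = j)

/-- `FD j n`: partitions with perimeter n having exactly j distinct part values repeated (≥ 2 times). -/
noncomputable def FD (j n : ℕ) : ℕ :=
  rP n (fun M => (M.toFinset.filter (fun v => 2 ≤ M.count v)).card = j)

/-!
Every partition of perimeter `n + 2` arises in exactly one way from a partition of perimeter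
`n + 1`, either by adjoining a part `1` or by increasing every part by `1`. Increasing every part
exchanges even and odd values and preserves multiplicities; adjoining a `1` creates a new odd value
if `1` was absent, and a new repeated value if `1` occurred exactly once. Either way the exceptional
partitions are parametrized by those of a smaller perimeter, and the generating polynomials of
both statistics satisfy `a (n + 3) = 2 * a (n + 2) + (X - 1) * a n`, with the same initial values.
-/

open Polynomial

variable {M : Multiset ℕ}

theorem IsPartition.cons_one (hM : IsPartition M) : IsPartition (1 ::ₘ M) :=
  ⟨Multiset.cons_ne_zero, by simpa using hM.2⟩

theorem IsPartition.map_succ (hM : IsPartition M) : IsPartition (M.map Nat.succ) :=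
  ⟨by simpa using hM.1, by simp⟩

theorem IsPartition.one_le_sup (hM : IsPartition M) : 1 ≤ M.sup := by
  obtain ⟨x, hx⟩ := Multiset.exists_mem_of_ne_zero hM.1
  exact (hM.2 x hx).trans_le (Multiset.le_sup hx)

theorem IsPartition.perim_pos (hM : IsPartition M) : 0 < perim M := by
  have := hM.one_le_sup
  have := Multiset.card_pos.2 hM.1
  unfold perim
  omega

theorem IsPartition.perim_cons_one (hM : IsPartition M) :
    perim (1 ::ₘ M) = perim M + 1 := by
  have hsup : (1 ::ₘ M).sup = M.sup := by
    rw [Multiset.sup_cons, sup_eq_right.2 hM.one_le_sup]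
  have := hM.one_le_sup
  simp only [perim, hsup, Multiset.card_cons]
  omega

theorem sup_map_succ (hM : M ≠ 0) : (M.map Nat.succ).sup = M.sup + 1 := by
  induction M using Multiset.induction_on with
  | empty => exact absurd rfl hM
  | cons a s ih =>
    rcases eq_or_ne s 0 with rfl | hs
    · simp
    · simp only [Multiset.map_cons, Multiset.sup_cons, ih hs]
      exact max_add_add_right a s.sup 1

theorem perim_map_succ (hM : M ≠ 0) : perim (M.map Nat.succ) = perim M + 1 := by
  have := Multiset.card_pos.2 hM
  simp only [perim, sup_map_succ hM, Multiset.card_map]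
  omega

theorem IsPartition.eq_singleton_one_or_cons_one_or_map_succ (hM : IsPartition M) :
    M = {1} ∨ (∃ N, IsPartition N ∧ 1 ::ₘ N = M) ∨ ∃ N, IsPartition N ∧ N.map Nat.succ = M := by
  by_cases h1 : 1 ∈ M
  · obtain ⟨N, rfl⟩ := Multiset.exists_cons_of_mem h1
    rcases eq_or_ne N 0 with rfl | hN
    · exact .inl rfl
    · exact .inr <| .inl ⟨N, ⟨hN, fun x hx => hM.2 x (Multiset.mem_cons_of_mem hx)⟩, rfl⟩
  · have two_le : ∀ x ∈ M, 2 ≤ x := fun x hx =>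
      Nat.lt_of_le_of_ne (hM.2 x hx) fun h => h1 (h ▸ hx)
    refine .inr <| .inr ⟨M.map Nat.pred, ⟨by simpa using hM.1, ?_⟩, ?_⟩
    · intro y hy
      obtain ⟨x, hx, rfl⟩ := Multiset.mem_map.1 hy
      exact Nat.pred_lt_pred one_ne_zero (two_le x hx)
    · rw [Multiset.map_map]
      exact (Multiset.map_congr rfl fun x hx => Nat.succ_pred_eq_of_pos (hM.2 x hx)).trans
        (Multiset.map_id M)

/-- The finite set of partitions of perimeter `n`, generated from `{1}` by adjoining a part `1`
and by increasing all parts by `1`. -/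
def perimPartitions : ℕ → Finset (Multiset ℕ)
  | 0 => ∅
  | 1 => {{1}}
  | n + 2 => (perimPartitions (n + 1)).image (1 ::ₘ ·) ∪
      (perimPartitions (n + 1)).image (Multiset.map Nat.succ)

theorem mem_perimPartitions {n : ℕ} :
    M ∈ perimPartitions n ↔ IsPartition M ∧ perim M = n := by
  induction n using perimPartitions.induct generalizing M with
  | case1 => simpa [perimPartitions] using fun hM : IsPartition M => hM.perim_pos.ne'
  | case2 =>
    simp only [perimPartitions, Finset.mem_singleton]
    refine ⟨by rintro rfl; simp [IsPartition, perim], fun ⟨hM, hper⟩ => ?_⟩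
    rcases hM.eq_singleton_one_or_cons_one_or_map_succ with
      h | ⟨N, hN, rfl⟩ | ⟨N, hN, rfl⟩
    · exact h
    · have := hN.perim_pos
      rw [hN.perim_cons_one] at hper
      omega
    · have := hN.perim_pos
      rw [perim_map_succ hN.1] at hper
      omega
  | case3 n ih =>
    simp only [perimPartitions, Finset.mem_union, Finset.mem_image, ih]
    constructor
    · rintro (⟨N, ⟨hN, hper⟩, rfl⟩ | ⟨N, ⟨hN, hper⟩, rfl⟩)
      · exact ⟨hN.cons_one, by rw [hN.perim_cons_one, hper]⟩
      · exact ⟨hN.map_succ, by rw [perim_map_succ hN.1, hper]⟩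
    · rintro ⟨hM, hper⟩
      rcases hM.eq_singleton_one_or_cons_one_or_map_succ with
        rfl | ⟨N, hN, rfl⟩ | ⟨N, hN, rfl⟩
      · simp [perim] at hper
      · rw [hN.perim_cons_one] at hper
        exact .inl ⟨N, ⟨hN, by omega⟩, rfl⟩
      · rw [perim_map_succ hN.1] at hper
        exact .inr ⟨N, ⟨hN, by omega⟩, rfl⟩

theorem IsPartition.one_notMem_map_succ (hM : IsPartition M) : 1 ∉ M.map Nat.succ := by
  simpa using fun h => (hM.2 0 h).ne rfl

section Sums

variable {A : Type*} [AddCommMonoid A] (f : Multiset ℕ → A) (n : ℕ)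

theorem sum_perimPartitions_add_two :
    ∑ M ∈ perimPartitions (n + 2), f M =
      ∑ M ∈ perimPartitions (n + 1), f (1 ::ₘ M) +
        ∑ M ∈ perimPartitions (n + 1), f (M.map Nat.succ) := by
  have hdisj : Disjoint ((perimPartitions (n + 1)).image (1 ::ₘ ·))
      ((perimPartitions (n + 1)).image (Multiset.map Nat.succ)) := by
    simp only [Finset.disjoint_left, Finset.mem_image]
    rintro _ ⟨M, -, rfl⟩ ⟨N, hN, h⟩
    exact (mem_perimPartitions.1 hN).1.one_notMem_map_succ (h ▸ Multiset.mem_cons_self 1 M)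
  rw [perimPartitions, Finset.sum_union hdisj,
    Finset.sum_image (fun _ _ _ _ => (Multiset.cons_inj_right 1).1),
    Finset.sum_image (Multiset.map_injective Nat.succ_injective).injOn]

theorem sum_perimPartitions_one_notMem :
    ∑ M ∈ perimPartitions (n + 1) with 1 ∉ M, f M =
      ∑ M ∈ perimPartitions n, f (M.map Nat.succ) := by
  cases n with
  | zero => simp [perimPartitions, Finset.filter_singleton]
  | succ n =>
    rw [Finset.sum_filter, sum_perimPartitions_add_two, Finset.sum_eq_zero (by simp), zero_add]
    exact Finset.sum_congr rfl fun M hM =>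
      if_pos (mem_perimPartitions.1 hM).1.one_notMem_map_succ

theorem sum_perimPartitions_count_one_eq_one :
    ∑ M ∈ perimPartitions (n + 2) with M.count 1 = 1, f M =
      ∑ M ∈ perimPartitions n, f (1 ::ₘ M.map Nat.succ) := by
  rw [Finset.sum_filter, sum_perimPartitions_add_two,
    ← sum_perimPartitions_one_notMem (fun M => f (1 ::ₘ M)), Finset.sum_filter]
  have hshift : ∑ M ∈ perimPartitions (n + 1),
      (if (M.map Nat.succ).count 1 = 1 then f (M.map Nat.succ) else 0) = 0 :=
    Finset.sum_eq_zero fun M hM => if_neg <| by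
      simp [Multiset.count_eq_zero.2 (mem_perimPartitions.1 hM).1.one_notMem_map_succ]
  simp [hshift]

end Sums

/-- The number of distinct even part values, the statistic counted by `FO`. -/
def numEven (M : Multiset ℕ) : ℕ := (M.toFinset.filter (fun v => Even v)).card

/-- The number of distinct odd part values, which trades places with `numEven` when all parts
are increased by `1`. -/
def numOdd (M : Multiset ℕ) : ℕ := (M.toFinset.filter (fun v => Odd v)).card

/-- The number of distinct repeated part values, the statistic counted by `FD`. -/
def numRepeated (M : Multiset ℕ) : ℕ := (M.toFinset.filter (fun v => 2 ≤ M.count v)).card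

theorem numEven_cons_of_odd {a : ℕ} (ha : Odd a) (M : Multiset ℕ) :
    numEven (a ::ₘ M) = numEven M := by
  simp [numEven, Finset.filter_insert, Nat.not_even_iff_odd.2 ha]

theorem numOdd_cons_of_odd {a : ℕ} (ha : Odd a) (M : Multiset ℕ) :
    numOdd (a ::ₘ M) = numOdd M + if a ∉ M then 1 else 0 := by
  by_cases h : a ∈ M <;> simp [numOdd, Finset.filter_insert, ha, h]

theorem numRepeated_cons (a : ℕ) (M : Multiset ℕ) :
    numRepeated (a ::ₘ M) = numRepeated M + if M.count a = 1 then 1 else 0 := by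
  have hcount : ∀ v, 2 ≤ (a ::ₘ M).count v ↔ 2 ≤ M.count v ∨ v = a ∧ M.count a = 1 := by
    intro v
    rw [Multiset.count_cons]
    grind
  have hmem : ∀ v, 2 ≤ M.count v → v ∈ M := fun v hv => Multiset.count_pos.1 (by omega)
  have hfilter : (a ::ₘ M).toFinset.filter (fun v => 2 ≤ (a ::ₘ M).count v) =
      if M.count a = 1 then insert a (M.toFinset.filter (fun v => 2 ≤ M.count v))
      else M.toFinset.filter (fun v => 2 ≤ M.count v) := by
    ext v
    simp only [Finset.mem_filter, Multiset.mem_toFinset, Multiset.mem_cons, hcount]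
    split_ifs <;> grind
  rw [numRepeated, hfilter]
  split_ifs with h
  · rw [Finset.card_insert_of_notMem (by simp [h]), numRepeated]
  · rfl

theorem card_filter_toFinset_map {α β : Type*} [DecidableEq α] [DecidableEq β] {f : α → β}
    (hf : Function.Injective f) (p : β → Prop) [DecidablePred p] (M : Multiset α) :
    ((M.map f).toFinset.filter p).card = (M.toFinset.filter (fun a => p (f a))).card := by
  rw [Multiset.toFinset_map, Finset.filter_image, Finset.card_image_of_injective _ hf]

theorem numEven_map_succ (M : Multiset ℕ) : numEven (M.map Nat.succ) = numOdd M := by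
  simp only [numEven, numOdd, card_filter_toFinset_map Nat.succ_injective, Nat.succ_eq_add_one,
    Nat.even_add_one, Nat.not_even_iff_odd]

theorem numOdd_map_succ (M : Multiset ℕ) : numOdd (M.map Nat.succ) = numEven M := by
  simp only [numEven, numOdd, card_filter_toFinset_map Nat.succ_injective, Nat.succ_eq_add_one,
    Nat.odd_add_one, Nat.not_odd_iff_even]

theorem numRepeated_map {f : ℕ → ℕ} (hf : Function.Injective f) (M : Multiset ℕ) :
    numRepeated (M.map f) = numRepeated M := by
  simp only [numRepeated, card_filter_toFinset_map hf, Multiset.count_map_eq_count' _ _ hf]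

/-- The generating polynomial of the statistic `s` over the partitions of perimeter `n`. -/
noncomputable def perimGenPoly (s : Multiset ℕ → ℕ) (n : ℕ) : ℤ[X] :=
  ∑ M ∈ perimPartitions n, X ^ s M

theorem coeff_perimGenPoly (s : Multiset ℕ → ℕ) (n j : ℕ) :
    (perimGenPoly s n).coeff j = rP n (fun M => s M = j) := by
  have hset : {M | IsPartition M ∧ perim M = n ∧ s M = j} =
      ((perimPartitions n).filter (fun M => s M = j) : Set (Multiset ℕ)) := by
    ext M
    simp [mem_perimPartitions, and_assoc]
  rw [rP, hset, Set.ncard_coe_finset]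
  simp [perimGenPoly, coeff_X_pow, eq_comm]

theorem pow_add_ite_one {R : Type*} [Ring R] (x : R) (k : ℕ) (p : Prop) [Decidable p] :
    x ^ (k + if p then 1 else 0) = x ^ k + (x - 1) * if p then x ^ k else 0 := by
  split_ifs <;> simp [pow_succ', sub_mul]

theorem perimGenPoly_numEven_add_two (n : ℕ) :
    perimGenPoly numEven (n + 2) =
      perimGenPoly numEven (n + 1) + perimGenPoly numOdd (n + 1) := by
  simp only [perimGenPoly, sum_perimPartitions_add_two, numEven_cons_of_odd odd_one,
    numEven_map_succ]

theorem perimGenPoly_numOdd_add_two (n : ℕ) :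
    perimGenPoly numOdd (n + 2) =
      perimGenPoly numEven (n + 2) + (X - 1) * perimGenPoly numEven n := by
  rw [perimGenPoly_numEven_add_two]
  simp only [perimGenPoly, sum_perimPartitions_add_two, numOdd_cons_of_odd odd_one,
    numOdd_map_succ, pow_add_ite_one, Finset.sum_add_distrib, ← Finset.mul_sum,
    ← Finset.sum_filter, sum_perimPartitions_one_notMem]
  ring

theorem perimGenPoly_numEven_add_three (n : ℕ) :
    perimGenPoly numEven (n + 3) =
      2 * perimGenPoly numEven (n + 2) + (X - 1) * perimGenPoly numEven n := by
  rw [perimGenPoly_numEven_add_two, perimGenPoly_numOdd_add_two]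
  ring

theorem perimGenPoly_numRepeated_add_three (n : ℕ) :
    perimGenPoly numRepeated (n + 3) =
      2 * perimGenPoly numRepeated (n + 2) + (X - 1) * perimGenPoly numRepeated n := by
  have hstat : ∀ M ∈ perimPartitions n,
      (X : ℤ[X]) ^ numRepeated (1 ::ₘ M.map Nat.succ) = X ^ numRepeated M := by
    intro M hM
    have hcount := Multiset.count_eq_zero.2 (mem_perimPartitions.1 hM).1.one_notMem_map_succ
    rw [numRepeated_cons, numRepeated_map Nat.succ_injective, hcount, if_neg zero_ne_one, add_zero]
  rw [perimGenPoly, sum_perimPartitions_add_two]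
  simp only [numRepeated_cons 1, numRepeated_map Nat.succ_injective, pow_add_ite_one,
    Finset.sum_add_distrib, ← Finset.mul_sum, ← Finset.sum_filter]
  rw [sum_perimPartitions_count_one_eq_one, Finset.sum_congr rfl hstat]
  simp only [perimGenPoly]
  ring

theorem perimGenPoly_one (s : Multiset ℕ → ℕ) : perimGenPoly s 1 = X ^ s {1} := by
  simp [perimGenPoly, perimPartitions]

theorem perimGenPoly_two (s : Multiset ℕ → ℕ) :
    perimGenPoly s 2 = X ^ s {1, 1} + X ^ s {2} := by
  rw [perimGenPoly, sum_perimPartitions_add_two]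
  simp [perimPartitions]

theorem perimGenPoly_numEven_eq_numRepeated (n : ℕ) :
    perimGenPoly numEven n = perimGenPoly numRepeated n := by
  induction n using Nat.strong_induction_on with
  | _ n ih =>
    match n with
    | 0 => rfl
    | 1 => simp only [perimGenPoly_one]; rfl
    | 2 =>
      rw [perimGenPoly_two, perimGenPoly_two, add_comm]
      rfl
    | n + 3 =>
      rw [perimGenPoly_numEven_add_three, perimGenPoly_numRepeated_add_three,
        ih (n + 2) (by omega), ih n (by omega)]

theorem stmt_0 (n j : ℕ) (hn : 1 ≤ n) : FO j n = FD j n := by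
  have hcoeff := congrArg (coeff · j) (perimGenPoly_numEven_eq_numRepeated n)
  simp only [coeff_perimGenPoly, Nat.cast_inj] at hcoeff
  exact hcoeff
end

section
/- Let (a_i)_{i≥0} and (b_i)_{i≥0} be strictly increasing sequences of positive integers with a_i ≥ b_i for all i ≥ 0, and set S = {a_0, a_1, a_2, …} and T = {b_0, b_1, b_2, …}. Then for every integer n ≥ 1, r_S(n) ≤ r_T(n). -/
open Multiset Finset Filter

/-!
Since `b i ≤ a i`, the set `T` of values of `b` has at least as many elements below each bound as
the set `S` of values of `a`. Hence sending the `k`-th element of `S` to the `k`-th element of `T`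
is a strictly increasing map `f : S → T` with `f s ≤ s`. Apply `f` to each part of a partition with
parts in `S`; the largest part drops from `m` to `f m`, and adding `m - f m` further copies of
`f m` restores the perimeter. The new largest part determines `m`, hence the number of added copies,
so the original partition can be recovered.
-/

section Multiset

variable {α β : Type*}

theorem finite_setOf_multiset_card_le_subset (k : ℕ) (s : Multiset α) :
    {M : Multiset α | Multiset.card M ≤ k ∧ M ⊆ s}.Finite := by
  classical
  refine (Set.finite_Iic (k • s)).subset fun M ⟨hcard, hsub⟩ ↦ Multiset.le_iff_count.2 fun x ↦ ?_
  by_cases hx : x ∈ M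
  · calc M.count x ≤ k := (M.count_le_card x).trans hcard
      _ ≤ k * s.count x := Nat.le_mul_of_pos_right k (Multiset.count_pos.2 (hsub hx))
      _ = (k • s).count x := (Multiset.count_nsmul x k s).symm
  · exact (Multiset.count_eq_zero_of_notMem hx).trans_le (Nat.zero_le _)

theorem injOn_multiset_map {f : α → β} {S : Set α} (hf : S.InjOn f) :
    Set.InjOn (Multiset.map f) {M | ∀ x ∈ M, x ∈ S} := by
  intro M hM N hN h
  lift M to Multiset S using hM
  lift N to Multiset S using hN
  rw [Multiset.map_map, Multiset.map_map] at h
  rw [Multiset.map_injective hf.injective h]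

variable [LinearOrder α] [OrderBot α] [LinearOrder β] [OrderBot β]

theorem multiset_sup_mem {M : Multiset α} (hM : M ≠ 0) : M.sup ∈ M := by
  obtain ⟨m, hm, hmax⟩ := M.exists_max_image id hM
  rwa [(Multiset.sup_le.2 hmax).antisymm (Multiset.le_sup hm)]

theorem multiset_sup_map_of_monotoneOn {f : α → β} {M : Multiset α} (hf : MonotoneOn f {x | x ∈ M})
    (hM : M ≠ 0) : (M.map f).sup = f M.sup := by
  have hmem := multiset_sup_mem hM
  refine le_antisymm ?_ (Multiset.le_sup (Multiset.mem_map_of_mem f hmem))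
  rw [Multiset.sup_le, Multiset.forall_mem_map_iff]
  exact fun x hx ↦ hf hx hmem (Multiset.le_sup hx)

end Multiset

theorem finite_setOf_perim_eq (n : ℕ) : {M | perim M = n}.Finite := by
  refine (finite_setOf_multiset_card_le_subset (n + 1) (Multiset.range (n + 2))).subset ?_
  intro M (hM : M.sup + Multiset.card M - 1 = n)
  refine ⟨by omega, fun x hx ↦ Multiset.mem_range.2 ?_⟩
  have hx_le : x ≤ M.sup := Multiset.le_sup hx
  omega

/-- Applies `f` to every part of `M` and then adds copies of the image of the largest part to make
up for the lost perimeter. The subtraction truncates, so the perimeter is kept only if `f` does not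
increase the largest part. -/
def perimMap (f : ℕ → ℕ) (M : Multiset ℕ) : Multiset ℕ :=
  M.map f + Multiset.replicate (M.sup - f M.sup) (f M.sup)

section PerimMap

variable {f : ℕ → ℕ} {M : Multiset ℕ} {S : Set ℕ}

theorem mem_perimMap (hM : M ≠ 0) {y : ℕ} : y ∈ perimMap f M ↔ ∃ x ∈ M, f x = y := by
  rw [perimMap, Multiset.mem_add, Multiset.mem_map, or_iff_left_iff_imp]
  exact fun hy ↦ ⟨M.sup, multiset_sup_mem hM, (Multiset.eq_of_mem_replicate hy).symm⟩

theorem perimMap_ne_zero (hM : M ≠ 0) : perimMap f M ≠ 0 :=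
  fun h ↦ hM (Multiset.map_eq_zero.1 (add_eq_zero.1 h).1)

theorem sup_perimMap (hf : MonotoneOn f {x | x ∈ M}) (hM : M ≠ 0) :
    (perimMap f M).sup = f M.sup := by
  rw [perimMap, Multiset.sup_add, multiset_sup_map_of_monotoneOn hf hM, sup_eq_left,
    Multiset.sup_le]
  exact fun y hy ↦ (Multiset.eq_of_mem_replicate hy).le

theorem perim_perimMap (hf : MonotoneOn f {x | x ∈ M}) (hM : M ≠ 0) (hle : f M.sup ≤ M.sup) :
    perim (perimMap f M) = perim M := by
  rw [perim, perim, sup_perimMap hf hM, perimMap, Multiset.card_add, Multiset.card_map,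
    Multiset.card_replicate]
  omega

theorem injOn_perimMap (hf : StrictMonoOn f S) :
    Set.InjOn (perimMap f) {M | M ≠ 0 ∧ ∀ x ∈ M, x ∈ S} := by
  rintro M ⟨hM, hMS⟩ N ⟨hN, hNS⟩ h
  have hsup : M.sup = N.sup := by
    apply hf.injOn (hMS _ (multiset_sup_mem hM)) (hNS _ (multiset_sup_mem hN))
    rw [← sup_perimMap (hf.monotoneOn.mono hMS) hM, h, sup_perimMap (hf.monotoneOn.mono hNS) hN]
  rw [perimMap, perimMap, hsup] at h
  exact injOn_multiset_map hf.injOn hMS hNS (add_right_cancel h)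

end PerimMap

section Comparison

variable {S T : Set ℕ}

theorem rP_le_rP_of_strictMonoOn {f : ℕ → ℕ} (hf : StrictMonoOn f S) (hfST : Set.MapsTo f S T)
    (hle : ∀ s ∈ S, f s ≤ s) (hT : ∀ t ∈ T, 0 < t) (n : ℕ) :
    rP n (fun M ↦ ∀ x ∈ M, x ∈ S) ≤ rP n (fun M ↦ ∀ x ∈ M, x ∈ T) := by
  have hinj : Set.InjOn (perimMap f) {M | IsPartition M ∧ perim M = n ∧ ∀ x ∈ M, x ∈ S} := by
    refine (injOn_perimMap hf).mono ?_
    exact fun M ⟨⟨hM, _⟩, _, hMS⟩ ↦ ⟨hM, hMS⟩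
  have hfin : {M | IsPartition M ∧ perim M = n ∧ ∀ x ∈ M, x ∈ T}.Finite :=
    (finite_setOf_perim_eq n).subset fun _ ⟨_, hperim, _⟩ ↦ hperim
  refine Set.ncard_le_ncard_of_injOn (perimMap f) ?_ hinj hfin
  rintro M ⟨⟨hM, -⟩, hperim, hMS⟩
  have hmemT : ∀ y ∈ perimMap f M, y ∈ T := by
    intro y hy
    obtain ⟨x, hx, rfl⟩ := (mem_perimMap hM).1 hy
    exact hfST (hMS x hx)
  have hperim' : perim (perimMap f M) = perim M :=
    perim_perimMap (hf.monotoneOn.mono hMS) hM (hle _ (hMS _ (multiset_sup_mem hM)))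
  exact ⟨⟨perimMap_ne_zero hM, fun y hy ↦ hT y (hmemT y hy)⟩, hperim'.trans hperim, hmemT⟩

variable [DecidablePred (· ∈ S)] [DecidablePred (· ∈ T)]

theorem exists_strictMonoOn_mapsTo_of_count_le
    (h : ∀ k, Nat.count (· ∈ S) k ≤ Nat.count (· ∈ T) k) :
    ∃ f : ℕ → ℕ, StrictMonoOn f S ∧ Set.MapsTo f S T ∧ ∀ s ∈ S, f s ≤ s := by
  have hlt : ∀ s ∈ S, Nat.count (· ∈ S) s < Nat.count (· ∈ T) (s + 1) := fun s hs ↦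
    (Nat.count_lt_count_succ_iff.2 hs).trans_le (h (s + 1))
  have hcard : ∀ s ∈ S, ∀ hT : (Set.ofPred (· ∈ T)).Finite,
      Nat.count (· ∈ S) s < #hT.toFinset := fun s hs hT ↦
    (hlt s hs).trans_le (Nat.count_le_card hT (s + 1))
  exact ⟨fun s ↦ Nat.nth (· ∈ T) (Nat.count (· ∈ S) s),
    fun s hs t ht hst ↦ Nat.nth_lt_nth' (Nat.count_strict_mono hs hst) (hcard t ht),
    fun s hs ↦ Nat.nth_mem _ (hcard s hs),
    fun s hs ↦ Nat.lt_succ_iff.1 (Nat.nth_lt_of_lt_count (hlt s hs))⟩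

theorem rP_le_rP_of_count_le (hT : ∀ t ∈ T, 0 < t)
    (h : ∀ k, Nat.count (· ∈ S) k ≤ Nat.count (· ∈ T) k) (n : ℕ) :
    rP n (fun M ↦ ∀ x ∈ M, x ∈ S) ≤ rP n (fun M ↦ ∀ x ∈ M, x ∈ T) := by
  obtain ⟨f, hf, hfST, hle⟩ := exists_strictMonoOn_mapsTo_of_count_le h
  exact rP_le_rP_of_strictMonoOn hf hfST hle hT n

end Comparison

theorem count_range_le_count_range {ι : Type*} {a b : ι → ℕ} [DecidablePred (· ∈ Set.range a)]
    [DecidablePred (· ∈ Set.range b)] (hb : b.Injective) (hab : ∀ i, b i ≤ a i) (k : ℕ) :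
    Nat.count (· ∈ Set.range a) k ≤ Nat.count (· ∈ Set.range b) k := by
  rw [Nat.count_eq_card_filter_range, Nat.count_eq_card_filter_range]
  refine Finset.card_le_card_of_forall_subsingleton (fun s t ↦ ∃ i, a i = s ∧ b i = t) ?_ ?_
  · intro s hs
    obtain ⟨hsk, i, rfl⟩ := Finset.mem_filter.1 hs
    have hbk : b i < k := (hab i).trans_lt (Finset.mem_range.1 hsk)
    exact ⟨b i, Finset.mem_filter.2 ⟨Finset.mem_range.2 hbk, i, rfl⟩, i, rfl, rfl⟩
  · rintro t - s ⟨-, i, rfl, hi⟩ s' ⟨-, j, rfl, hj⟩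
    rw [hb (hi.trans hj.symm)]

theorem stmt_2_general {ι : Type*} (a b : ι → ℕ) (hb : b.Injective) (hbpos : ∀ i, 0 < b i)
    (hab : ∀ i, b i ≤ a i) (n : ℕ) :
    rP n (fun M ↦ ∀ x ∈ M, x ∈ Set.range a) ≤ rP n (fun M ↦ ∀ x ∈ M, x ∈ Set.range b) := by
  classical
  exact rP_le_rP_of_count_le (Set.forall_mem_range.2 hbpos) (count_range_le_count_range hb hab) n

theorem stmt_2 (a b : ℕ → ℕ) (ha : StrictMono a) (hb : StrictMono b)
    (hapos : ∀ i, 0 < a i) (hbpos : ∀ i, 0 < b i)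
    (hab : ∀ i, b i ≤ a i) (n : ℕ) (hn : 1 ≤ n) :
    rP n (fun M => ∀ x ∈ M, x ∈ Set.range a) ≤
      rP n (fun M => ∀ x ∈ M, x ∈ Set.range b) :=
  stmt_2_general a b hb.injective hbpos hab n
end

section
/- For positive integers d, n and 1 ≤ a ≤ d+1, E(f_d^{(a)}(n), h_d^{(a)}(n)) = ∑_{m=1}^{n−1} f_d^{(a)}(n−m)·(f_d^{(1)}(m) − f_d^{(d+1)}(m)); that is, the excess of the total number of parts over all partitions counted by f_d^{(a)}(n) over the total number of parts over all partitions counted by h_d^{(a)}(n) equals ∑_{m=1}^{n−1} f_d^{(a)}(n−m) f_d^{(1)}(m) − ∑_{m=1}^{n−1} f_d^{(a)}(n−m) f_d^{(d+1)}(m). -/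
open Multiset Finset Filter

/-- `fP d a n`: partitions of perimeter n with every part ≡ a (mod d+1). -/
noncomputable def fP (d a n : ℕ) : ℕ :=
  rP n (fun M => ∀ x ∈ M, x % (d + 1) = a % (d + 1))

/-- `hP d a n`: partitions of perimeter n with d-distinct parts, all parts ≥ a. -/
noncomputable def hP (d a n : ℕ) : ℕ :=
  rP n (fun M => M.Nodup ∧ (∀ x ∈ M, a ≤ x) ∧
    ∀ x ∈ M, ∀ y ∈ M, x ≠ y → d ≤ max x y - min x y)

/-- The set of partitions counted by `fP d a n`. -/
def fSet (d a n : ℕ) : Set (Multiset ℕ) :=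
  {M | IsPartition M ∧ perim M = n ∧ ∀ x ∈ M, x % (d + 1) = a % (d + 1)}

/-- The set of partitions counted by `hP d a n`. -/
def hSet (d a n : ℕ) : Set (Multiset ℕ) :=
  {M | IsPartition M ∧ perim M = n ∧ M.Nodup ∧ (∀ x ∈ M, a ≤ x) ∧
    ∀ x ∈ M, ∀ y ∈ M, x ≠ y → d ≤ max x y - min x y}

/-- The excess of the total number of parts over partitions counted by `fP d a n`
over the total number of parts over partitions counted by `hP d a n`. -/
noncomputable def Efh (d a n : ℕ) : ℤ :=
  (∑ᶠ M ∈ fSet d a n, (Multiset.card M : ℤ)) - ∑ᶠ M ∈ hSet d a n, (Multiset.card M : ℤ)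

/-!
Let a word in the letters `1` and `d + 1` act on the one-part partition `a` in two ways. In the
first, the letter `1` duplicates the largest part and `d + 1` raises it by `d + 1`; this produces
each partition with parts congruent to `a` modulo `d + 1` exactly once. In the second, the letter
`d + 1` adds a part exceeding the largest one by `d` and `1` raises the largest part by one; this
produces each `d`-distinct partition with parts at least `a` exactly once. Both times a letter `x`
increases the perimeter by `x`, so the same words give the partitions of perimeter `n` of either
kind, and the excess is the number of letters `1` minus the number of letters `d + 1` in all of
them. Marking a letter `k` splits a word into the words before and after it; acting on the one-part
partitions `a` and `k` respectively, these two words correspond to partitions of perimeters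
`n - m` and `m` counted by `fP d a` and `fP d k`, which gives the two convolutions.
-/

namespace PartitionGrowth

section LargestElement

variable {α : Type*}

lemma sup_cons_of_forall_le [SemilatticeSup α] [OrderBot α] {t : α} {R : Multiset α}
    (hR : ∀ x ∈ R, x ≤ t) : (t ::ₘ R).sup = t := by
  rw [Multiset.sup_cons, sup_eq_left, Multiset.sup_le]
  exact hR

lemma cons_inj_of_forall_le [PartialOrder α] {t t' : α} {R R' : Multiset α}
    (hR : ∀ x ∈ R, x ≤ t) (hR' : ∀ x ∈ R', x ≤ t') (h : t ::ₘ R = t' ::ₘ R') : t = t' ∧ R = R' := by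
  have ht : t ∈ t' ::ₘ R' := h ▸ Multiset.mem_cons_self t R
  have ht' : t' ∈ t ::ₘ R := h ▸ Multiset.mem_cons_self t' R'
  obtain rfl : t = t' := le_antisymm ((Multiset.mem_cons.1 ht).elim le_of_eq (hR' t))
    ((Multiset.mem_cons.1 ht').elim le_of_eq (hR t'))
  exact ⟨rfl, (Multiset.cons_inj_right t).1 h⟩

lemma exists_eq_cons_forall_le [LinearOrder α] {M : Multiset α} (hM : M ≠ 0) :
    ∃ t R, M = t ::ₘ R ∧ ∀ x ∈ R, x ≤ t := by
  obtain ⟨t, ht, hmax⟩ := Multiset.exists_max_image id hM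
  exact ⟨t, M.erase t, (Multiset.cons_erase ht).symm,
    fun x hx => hmax x (Multiset.mem_of_mem_erase hx)⟩

end LargestElement

section Words

variable {α : Type*}

/-- The occurrences of the letter `k` in the word `l`, each encoded as the pair of the prefix
before it and the suffix after it. -/
def occurrences (k : α) (l : List α) : Set (List α × List α) :=
  {p | p.1 ++ k :: p.2 = l}

lemma occurrences_cons_of_ne {k x : α} (hxk : x ≠ k) (l : List α) :
    occurrences k (x :: l) = Prod.map (x :: ·) id '' occurrences k l := by
  ext ⟨u, v⟩
  cases u <;> simp [occurrences, hxk.symm, eq_comm, and_comm]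

lemma occurrences_cons_self (k : α) (l : List α) :
    occurrences k (k :: l) = insert ([], l) (Prod.map (k :: ·) id '' occurrences k l) := by
  ext ⟨u, v⟩
  cases u <;> simp [occurrences, eq_comm, and_comm]

lemma encard_occurrences [DecidableEq α] (k : α) (l : List α) :
    (occurrences k l).encard = l.count k := by
  have cons_injective (x : α) : (Prod.map (x :: ·) id : List α × List α → _).Injective :=
    (List.cons_injective).prodMap Function.injective_id
  induction l with
  | nil => simp [occurrences]
  | cons x l ih =>
    by_cases hxk : x = k
    · subst hxk
      rw [occurrences_cons_self, Set.encard_insert_of_notMem (by simp),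
        (cons_injective x).encard_image, ih, List.count_cons_self, Nat.cast_succ]
    · rw [occurrences_cons_of_ne hxk, (cons_injective x).encard_image, ih,
        List.count_cons_of_ne hxk]

lemma finite_occurrences (k : α) (l : List α) : (occurrences k l).Finite := by
  classical exact Set.finite_of_encard_eq_coe (encard_occurrences k l)

lemma ncard_occurrences [DecidableEq α] (k : α) (l : List α) :
    (occurrences k l).ncard = l.count k := by
  rw [Set.ncard, encard_occurrences, ENat.toNat_natCast]

end Words

section GrowthWords

variable {A : Set ℕ}

/-- The words with letters in `A` that lead from perimeter `a` to perimeter `n`, each letter being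
the amount by which the perimeter grows. -/
def growthWords (A : Set ℕ) (a n : ℕ) : Set (List ℕ) :=
  {l | (∀ x ∈ l, x ∈ A) ∧ a + l.sum = n}

lemma finite_growthWords (hA : ∀ x ∈ A, 0 < x) (a n : ℕ) : (growthWords A a n).Finite := by
  refine (Set.finite_range (Composition.blocks : Composition (n - a) → List ℕ)).subset ?_
  rintro l ⟨hl, hsum⟩
  exact ⟨⟨l, fun hx => hA _ (hl _ hx), by omega⟩, rfl⟩

lemma growthWords_zero {a : ℕ} (ha : 0 < a) : growthWords A a 0 = ∅ := by
  ext l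
  simp [growthWords, ha.ne']

lemma biUnion_occurrences_growthWords {k : ℕ} (hk : k ∈ A) (a n : ℕ) :
    ⋃ l ∈ growthWords A a n, occurrences k l =
      ⋃ p ∈ (antidiagonal n : Set (ℕ × ℕ)), growthWords A a p.1 ×ˢ growthWords A k p.2 := by
  ext ⟨u, v⟩
  simp only [Set.mem_iUnion₂, occurrences, Set.mem_ofPred_eq, exists_prop, exists_eq_right',
    growthWords, List.forall_mem_append, List.forall_mem_cons, List.sum_append, List.sum_cons, hk,
    true_and, Set.mem_prod, Finset.mem_coe]
  constructor
  · rintro ⟨⟨hu, hv⟩, hsum⟩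
    exact ⟨(a + u.sum, k + v.sum), HasAntidiagonal.mem_antidiagonal.2 (by omega),
      ⟨hu, rfl⟩, hv, rfl⟩
  · rintro ⟨⟨i, j⟩, hij, ⟨hu, rfl⟩, hv, rfl⟩
    have := HasAntidiagonal.mem_antidiagonal.1 hij
    exact ⟨⟨hu, hv⟩, by omega⟩

lemma finsum_mem_growthWords_count (hA : ∀ x ∈ A, 0 < x) {k : ℕ} (hk : k ∈ A) (a n : ℕ) :
    ∑ᶠ l ∈ growthWords A a n, l.count k =
      ∑ p ∈ antidiagonal n, (growthWords A a p.1).ncard * (growthWords A k p.2).ncard := by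
  have disjoint_occurrences : (growthWords A a n).PairwiseDisjoint (occurrences k) :=
    fun l _ l' _ hne => Set.disjoint_left.2 fun _ h h' => hne (h.symm.trans h')
  have disjoint_prod : (antidiagonal n : Set (ℕ × ℕ)).PairwiseDisjoint
      fun p => growthWords A a p.1 ×ˢ growthWords A k p.2 :=
    fun p _ q _ hne => Set.disjoint_left.2 fun _ h h' =>
      hne (Prod.ext (h.1.2.symm.trans h'.1.2) (h.2.2.symm.trans h'.2.2))
  calc ∑ᶠ l ∈ growthWords A a n, l.count k
    _ = ∑ᶠ l ∈ growthWords A a n, (occurrences k l).ncard := by simp only [ncard_occurrences]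
    _ = (⋃ l ∈ growthWords A a n, occurrences k l).ncard :=
      ((finite_growthWords hA a n).ncard_biUnion (fun l _ => finite_occurrences k l)
        disjoint_occurrences).symm
    _ = ∑ᶠ p ∈ (antidiagonal n : Set (ℕ × ℕ)),
          (growthWords A a p.1 ×ˢ growthWords A k p.2).ncard := by
      rw [biUnion_occurrences_growthWords hk]
      exact (Finset.finite_toSet _).ncard_biUnion
        (fun p _ => (finite_growthWords hA a p.1).prod (finite_growthWords hA k p.2)) disjoint_prod
    _ = _ := by simp only [finsum_mem_coe_finset, Set.ncard_prod]

end GrowthWords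

section Grow

/-- The largest part of `grow s a l`. -/
def largest (s a : ℕ) : List ℕ → ℕ
  | [] => a
  | x :: l => if x = s then largest s a l + (s - 1) else largest s a l + x

/-- The parts of `grow s a l` other than one copy of the largest part. -/
def others (s a : ℕ) : List ℕ → Multiset ℕ
  | [] => 0
  | x :: l => if x = s then largest s a l ::ₘ others s a l else others s a l

/-- The partition grown from the single part `a` by the letters of a word, read from right to left:
the letter `s` adds a new part exceeding the largest part by `s - 1`, and any other letter `x`
raises the largest part by `x`. Each letter is thus the amount by which the perimeter grows. -/
def grow (s a : ℕ) (l : List ℕ) : Multiset ℕ :=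
  largest s a l ::ₘ others s a l

variable {s r a : ℕ}

lemma le_largest (s a : ℕ) (l : List ℕ) : a ≤ largest s a l := by
  induction l with
  | nil => exact le_rfl
  | cons x l ih => grind [largest]

lemma add_le_largest {l : List ℕ} : ∀ y ∈ others s a l, y + (s - 1) ≤ largest s a l := by
  induction l with
  | nil => simp [others]
  | cons x l ih => grind [largest, others]

lemma le_largest_of_mem_others {l : List ℕ} : ∀ y ∈ others s a l, y ≤ largest s a l :=
  fun y hy => le_of_add_le_left (add_le_largest y hy)

lemma forall_mem_grow {p : ℕ → Prop} {l : List ℕ} (base : p a)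
    (add_part : ∀ t, p t → p (t + (s - 1))) (raise : ∀ t, ∀ x ∈ l, x ≠ s → p t → p (t + x)) :
    ∀ y ∈ grow s a l, p y := by
  induction l with
  | nil => simpa [grow, largest, others] using base
  | cons x l ih =>
    have hl := ih fun t z hz => raise t z (List.mem_cons_of_mem x hz)
    simp only [grow, Multiset.forall_mem_cons] at hl ⊢
    by_cases hx : x = s
    · simp only [largest, others, if_pos hx, Multiset.forall_mem_cons]
      exact ⟨add_part _ hl.1, hl⟩
    · simp only [largest, others, if_neg hx]
      exact ⟨raise _ x List.mem_cons_self hx hl.1, hl.2⟩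

lemma card_grow (s a : ℕ) (l : List ℕ) : Multiset.card (grow s a l) = l.count s + 1 := by
  suffices Multiset.card (others s a l) = l.count s by rw [grow, Multiset.card_cons, this]
  induction l with
  | nil => rfl
  | cons x l ih => by_cases hx : x = s <;> simp [others, hx, ih]

lemma perim_grow (hs : 0 < s) (a : ℕ) (l : List ℕ) : perim (grow s a l) = a + l.sum := by
  have largest_add_card_others : largest s a l + Multiset.card (others s a l) = a + l.sum := by
    induction l with
    | nil => rfl
    | cons x l ih =>
      by_cases hx : x = s
      · simp only [largest, others, if_pos hx, Multiset.card_cons, List.sum_cons]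
        omega
      · simp only [largest, others, if_neg hx, List.sum_cons]
        omega
  rw [perim, grow, sup_cons_of_forall_le le_largest_of_mem_others, Multiset.card_cons]
  omega

lemma others_cons_ne_zero_of_largest_eq (hr : 0 < r) {l : List ℕ} {x : ℕ}
    (hx : x ∈ ({s, r} : Set ℕ)) (ht : largest s a (x :: l) = a) : others s a (x :: l) ≠ 0 := by
  by_cases hxs : x = s
  · rw [others, if_pos hxs]
    exact Multiset.cons_ne_zero
  · obtain rfl := hx.resolve_left hxs
    rw [largest, if_neg hxs] at ht
    have := le_largest s a l
    omega

lemma largest_cons_ne_of_others_cons_eq (hr : 0 < r) (hrs : r ≠ s) {l l' : List ℕ}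
    (hR : others s a (s :: l) = others s a (r :: l')) :
    largest s a (s :: l) ≠ largest s a (r :: l') := by
  simp only [largest, others, if_true, if_neg hrs] at hR ⊢
  have := add_le_largest (largest s a l) (hR ▸ Multiset.mem_cons_self _ _)
  omega

lemma eq_of_largest_eq_of_others_eq (hr : 0 < r) {l l' : List ℕ}
    (hl : ∀ x ∈ l, x ∈ ({s, r} : Set ℕ)) (hl' : ∀ x ∈ l', x ∈ ({s, r} : Set ℕ))
    (ht : largest s a l = largest s a l') (hR : others s a l = others s a l') : l = l' := by
  induction l generalizing l' with
  | nil =>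
    cases l' with
    | nil => rfl
    | cons y l' =>
      exact absurd hR.symm
        (others_cons_ne_zero_of_largest_eq hr (hl' y List.mem_cons_self) ht.symm)
  | cons x l ih =>
    cases l' with
    | nil => exact absurd hR (others_cons_ne_zero_of_largest_eq hr (hl x List.mem_cons_self) ht)
    | cons y l' =>
      obtain ⟨hx, hl⟩ := List.forall_mem_cons.1 hl
      obtain ⟨hy, hl'⟩ := List.forall_mem_cons.1 hl'
      by_cases hxs : x = s <;> by_cases hys : y = s
      · subst hxs hys
        simp only [others, if_true] at hR
        obtain ⟨ht, hR⟩ :=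
          cons_inj_of_forall_le le_largest_of_mem_others le_largest_of_mem_others hR
        rw [ih hl hl' ht hR]
      · obtain rfl := hy.resolve_left hys
        subst hxs
        exact absurd ht (largest_cons_ne_of_others_cons_eq hr hys hR)
      · obtain rfl := hx.resolve_left hxs
        subst hys
        exact absurd ht.symm (largest_cons_ne_of_others_cons_eq hr hxs hR.symm)
      · obtain rfl := hx.resolve_left hxs
        obtain rfl := hy.resolve_left hys
        simp only [largest, others, if_neg hxs, add_left_inj] at ht hR
        rw [ih hl hl' ht hR]

lemma grow_injOn (hr : 0 < r) : {l | ∀ x ∈ l, x ∈ ({s, r} : Set ℕ)}.InjOn (grow s a) := by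
  intro l hl l' hl' h
  obtain ⟨ht, hR⟩ := cons_inj_of_forall_le le_largest_of_mem_others le_largest_of_mem_others h
  exact eq_of_largest_eq_of_others_eq hr hl hl' ht hR

lemma largest_replicate_append (hrs : r ≠ s) (a j : ℕ) (l : List ℕ) :
    largest s a (List.replicate j r ++ l) = largest s a l + j * r := by
  induction j with
  | zero => simp
  | succ j ih => rw [List.replicate_succ, List.cons_append, largest, if_neg hrs, ih]; ring

lemma others_replicate_append (hrs : r ≠ s) (a j : ℕ) (l : List ℕ) :
    others s a (List.replicate j r ++ l) = others s a l := by
  induction j with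
  | zero => simp
  | succ j ih => rw [List.replicate_succ, List.cons_append, others, if_neg hrs, ih]

lemma grow_replicate_append (hrs : r ≠ s) (a j : ℕ) (l : List ℕ) :
    grow s a (List.replicate j r ++ l) = (largest s a l + j * r) ::ₘ others s a l := by
  rw [grow, largest_replicate_append hrs, others_replicate_append hrs]

lemma exists_grow_eq {P : Multiset ℕ → Prop} (hrs : r ≠ s)
    (singleton : ∀ t, P {t} → ∃ j, t = a + j * r)
    (cons_cons : ∀ t u R, (∀ x ∈ u ::ₘ R, x ≤ t) → P (t ::ₘ u ::ₘ R) →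
      P (u ::ₘ R) ∧ ∃ j, t = u + (s - 1) + j * r)
    {M : Multiset ℕ} (hM : M ≠ 0) (hP : P M) :
    ∃ l : List ℕ, (∀ x ∈ l, x ∈ ({s, r} : Set ℕ)) ∧ grow s a l = M := by
  induction hc : Multiset.card M generalizing M with
  | zero => exact absurd (Multiset.card_eq_zero.1 hc) hM
  | succ c ih =>
    obtain ⟨t, M, rfl, hMt⟩ := exists_eq_cons_forall_le hM
    rcases eq_or_ne M 0 with rfl | hM'
    · obtain ⟨j, rfl⟩ := singleton t hP
      refine ⟨List.replicate j r ++ [], by simp, ?_⟩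
      rw [grow_replicate_append hrs, largest, others]
    · obtain ⟨u, R, rfl, hRu⟩ := exists_eq_cons_forall_le hM'
      obtain ⟨hP', j, rfl⟩ := cons_cons t u R hMt hP
      obtain ⟨l, hl, hgrow⟩ := ih hM' hP' (by simpa using hc)
      obtain ⟨rfl, rfl⟩ := cons_inj_of_forall_le le_largest_of_mem_others hRu hgrow
      refine ⟨List.replicate j r ++ s :: l, ?_, ?_⟩
      · refine List.forall_mem_append.2 ⟨fun x hx => ?_, List.forall_mem_cons.2 ⟨.inl rfl, hl⟩⟩
        exact .inr (List.eq_of_mem_replicate hx)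
      · rw [grow_replicate_append hrs, largest, others, if_pos rfl, if_pos rfl]

end Grow

section Congruent

variable {d a n : ℕ}

lemma exists_eq_add_mul_of_mod_eq {k u t : ℕ} (hut : u ≤ t) (h : t % k = u % k) :
    ∃ j, t = u + j * k := by
  obtain ⟨j, hj⟩ := (Nat.modEq_iff_dvd' hut).1 h.symm
  exact ⟨j, by rw [mul_comm]; omega⟩

lemma le_of_mod_eq {k t : ℕ} (ht : 0 < t) (hak : a ≤ k) (h : t % k = a % k) : a ≤ t := by
  by_contra! hta
  have := Nat.le_of_dvd (by omega) ((Nat.modEq_iff_dvd' hta.le).1 h)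
  omega

lemma bijOn_grow_fSet (hd : 1 ≤ d) (ha1 : 1 ≤ a) (ha2 : a ≤ d + 1) :
    Set.BijOn (grow 1 a) (growthWords {1, d + 1} a n) (fSet d a n) := by
  refine ⟨fun l hl => ⟨⟨Multiset.cons_ne_zero, ?_⟩, ?_, ?_⟩, ?_, ?_⟩
  · exact forall_mem_grow ha1 (fun t ht => by omega) (fun t x _ _ ht => by omega)
  · rw [perim_grow one_pos, hl.2]
  · refine forall_mem_grow rfl (fun t ht => ht) fun t x hx hx1 ht => ?_
    obtain rfl := (hl.1 x hx).resolve_left hx1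
    rw [Nat.add_mod_right, ht]
  · exact (grow_injOn d.succ_pos).mono fun l hl => hl.1
  · rintro M ⟨⟨hM0, hpos⟩, hperim, hmod⟩
    obtain ⟨l, hl, rfl⟩ := exists_grow_eq (s := 1) (r := d + 1) (a := a)
      (P := fun M => (∀ x ∈ M, 0 < x) ∧ ∀ x ∈ M, x % (d + 1) = a % (d + 1)) (by omega)
      (fun t ht => exists_eq_add_mul_of_mod_eq
        (le_of_mod_eq (by simpa using ht.1) ha2 (by simpa using ht.2)) (by simpa using ht.2))
      (fun t u R htu h => by
        simp only [Multiset.forall_mem_cons] at h htu ⊢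
        exact ⟨⟨h.1.2, h.2.2⟩,
          exists_eq_add_mul_of_mod_eq htu.1 (h.2.1.trans h.2.2.1.symm)⟩)
      hM0 ⟨hpos, hmod⟩
    exact ⟨l, ⟨hl, (perim_grow one_pos a l).symm.trans hperim⟩, rfl⟩

end Congruent

section DDistinct

variable {d a n : ℕ}

/-- The parts of `M` are distinct and any two of them differ by at least `d`. -/
def DDistinct (d : ℕ) (M : Multiset ℕ) : Prop :=
  M.Nodup ∧ ∀ x ∈ M, ∀ y ∈ M, x ≠ y → d ≤ max x y - min x y

lemma dDistinct_cons_iff (hd : 1 ≤ d) {t : ℕ} {R : Multiset ℕ} (hR : ∀ x ∈ R, x ≤ t) :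
    DDistinct d (t ::ₘ R) ↔ (∀ x ∈ R, x + d ≤ t) ∧ DDistinct d R := by
  simp only [DDistinct, Multiset.nodup_cons, Multiset.forall_mem_cons]
  constructor
  · rintro ⟨⟨htR, hnd⟩, ⟨-, hgap⟩, hpair⟩
    refine ⟨fun x hx => ?_, hnd, fun x hx => (hpair x hx).2⟩
    have := hgap x hx (by rintro rfl; exact htR hx)
    have := hR x hx
    omega
  · rintro ⟨hgap, hnd, hpair⟩
    refine ⟨⟨fun ht => ?_, hnd⟩, ⟨by simp, fun x hx _ => ?_⟩, fun x hx => ⟨fun _ => ?_, hpair x hx⟩⟩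
    · have := hgap t ht
      omega
    all_goals
      have := hgap x hx
      omega

lemma dDistinct_grow (hd : 1 ≤ d) (a : ℕ) (l : List ℕ) : DDistinct d (grow (d + 1) a l) := by
  refine (dDistinct_cons_iff hd le_largest_of_mem_others).2 ⟨add_le_largest, ?_⟩
  induction l with
  | nil => simp [others, DDistinct]
  | cons x l ih =>
    by_cases hx : x = d + 1
    · rw [others, if_pos hx]
      exact (dDistinct_cons_iff hd le_largest_of_mem_others).2 ⟨add_le_largest, ih⟩
    · rwa [others, if_neg hx]

lemma bijOn_grow_hSet (hd : 1 ≤ d) (ha1 : 1 ≤ a) :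
    Set.BijOn (grow (d + 1) a) (growthWords {1, d + 1} a n) (hSet d a n) := by
  have le_of_mem_grow (l : List ℕ) : ∀ x ∈ grow (d + 1) a l, a ≤ x :=
    forall_mem_grow le_rfl (fun t ht => by omega) (fun t x _ _ ht => by omega)
  have hdist (l : List ℕ) := dDistinct_grow hd a l
  refine ⟨fun l hl => ⟨⟨Multiset.cons_ne_zero, fun x hx => ha1.trans (le_of_mem_grow l x hx)⟩, ?_,
    (hdist l).1, le_of_mem_grow l, (hdist l).2⟩, ?_, ?_⟩
  · rw [perim_grow d.succ_pos, hl.2]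
  · rw [Set.pair_comm]
    exact (grow_injOn one_pos).mono fun l hl => hl.1
  · rintro M ⟨⟨hM0, -⟩, hperim, hnodup, hle, hgap⟩
    obtain ⟨l, hl, rfl⟩ := exists_grow_eq (s := d + 1) (r := 1) (a := a)
      (P := fun M => (∀ x ∈ M, a ≤ x) ∧ DDistinct d M) (by omega)
      (fun t ht => exists_eq_add_mul_of_mod_eq (by simpa using ht.1) (by simp [Nat.mod_one]))
      (fun t u R htu h => by
        rw [dDistinct_cons_iff hd htu] at h
        simp only [Multiset.forall_mem_cons] at h
        exact ⟨⟨by simpa using h.1.2, h.2.2⟩,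
          exists_eq_add_mul_of_mod_eq h.2.1.1 (by simp [Nat.mod_one])⟩)
      hM0 ⟨hle, hnodup, hgap⟩
    rw [Set.pair_comm] at hl
    exact ⟨l, ⟨hl, (perim_grow d.succ_pos a l).symm.trans hperim⟩, rfl⟩

end DDistinct

section Excess

lemma sum_antidiagonal_eq_sum_Icc {R : Type*} [NonUnitalNonAssocSemiring R] {f g : ℕ → R}
    (hf : f 0 = 0) (hg : g 0 = 0) (n : ℕ) :
    ∑ p ∈ antidiagonal n, f p.1 * g p.2 = ∑ m ∈ Finset.Icc 1 (n - 1), f (n - m) * g m := by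
  rw [← Finset.Nat.sum_antidiagonal_swap, Finset.Nat.sum_antidiagonal_eq_sum_range_succ_mk]
  refine (Finset.sum_subset (fun m => ?_) fun m hm hm' => ?_).symm
  · simp only [Finset.mem_Icc, Finset.mem_range]
    omega
  · obtain rfl | rfl : m = 0 ∨ m = n := by
      simp only [Finset.mem_Icc, Finset.mem_range] at hm hm'
      omega
    · simp [hg]
    · simp [hf]

variable {d a n : ℕ}

lemma fP_eq_ncard_growthWords (hd : 1 ≤ d) (ha1 : 1 ≤ a) (ha2 : a ≤ d + 1) :
    fP d a n = (growthWords {1, d + 1} a n).ncard :=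
  (bijOn_grow_fSet hd ha1 ha2).ncard_eq.symm

lemma fP_zero (hd : 1 ≤ d) (ha1 : 1 ≤ a) (ha2 : a ≤ d + 1) : fP d a 0 = 0 := by
  rw [fP_eq_ncard_growthWords hd ha1 ha2, growthWords_zero ha1, Set.ncard_empty]

lemma Efh_eq_finsum_count_sub_count (hd : 1 ≤ d) (ha1 : 1 ≤ a) (ha2 : a ≤ d + 1) :
    Efh d a n = ((∑ᶠ l ∈ growthWords {1, d + 1} a n, l.count 1 : ℕ) : ℤ) -
      (∑ᶠ l ∈ growthWords {1, d + 1} a n, l.count (d + 1) : ℕ) := by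
  have hfin : (growthWords {1, d + 1} a n).Finite := finite_growthWords (by simp) a n
  rw [Efh, ← finsum_mem_eq_of_bijOn _ (bijOn_grow_fSet hd ha1 ha2) fun l _ => rfl,
    ← finsum_mem_eq_of_bijOn _ (bijOn_grow_hSet hd ha1) fun l _ => rfl,
    Nat.cast_finsum_mem hfin, Nat.cast_finsum_mem hfin, ← finsum_mem_sub_distrib _ _ hfin,
    ← finsum_mem_sub_distrib _ _ hfin]
  simp [card_grow]

lemma finsum_count_eq_sum_fP_mul_fP (hd : 1 ≤ d) (ha1 : 1 ≤ a) (ha2 : a ≤ d + 1) {k : ℕ}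
    (hk : k ∈ ({1, d + 1} : Set ℕ)) :
    ∑ᶠ l ∈ growthWords {1, d + 1} a n, l.count k =
      ∑ m ∈ Finset.Icc 1 (n - 1), fP d a (n - m) * fP d k m := by
  have hk1 : 1 ≤ k := by grind
  have hk2 : k ≤ d + 1 := by grind
  rw [finsum_mem_growthWords_count (by simp) hk,
    ← sum_antidiagonal_eq_sum_Icc (fP_zero hd ha1 ha2) (fP_zero hd hk1 hk2)]
  simp only [fP_eq_ncard_growthWords hd ha1 ha2, fP_eq_ncard_growthWords hd hk1 hk2]

end Excess

end PartitionGrowth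

open PartitionGrowth in
theorem stmt_3 (d a n : ℕ) (hd : 1 ≤ d) (hn : 1 ≤ n) (ha1 : 1 ≤ a) (ha2 : a ≤ d + 1) :
    Efh d a n =
      (∑ m ∈ Finset.Icc 1 (n - 1), (fP d a (n - m) : ℤ) * (fP d 1 m : ℤ)) -
        ∑ m ∈ Finset.Icc 1 (n - 1), (fP d a (n - m) : ℤ) * (fP d (d + 1) m : ℤ) := by
  rw [Efh_eq_finsum_count_sub_count hd ha1 ha2,
    finsum_count_eq_sum_fP_mul_fP hd ha1 ha2 (Set.mem_insert 1 _),
    finsum_count_eq_sum_fP_mul_fP hd ha1 ha2 (Set.mem_insert_of_mem 1 rfl)]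
  push_cast
  rfl
end

section
/- For positive integers d, n and 1 ≤ a ≤ d+1, ∑_{m=1}^{n−1} f_d^{(a)}(n−m) f_d^{(1)}(m) ≥ ∑_{m=1}^{n−1} f_d^{(a)}(n−m) f_d^{(d+1)}(m). -/
open Multiset Finset Filter

/-!
Subtracting `s` from every part of a partition and adjoining `s` new parts equal to `a` lowers the
largest part by `s` and raises the number of parts by `s`, so it preserves the perimeter as long as
`a` does not exceed the new largest part. With `s = b - a` this gives an injection from the
partitions with parts `≡ b` to those with parts `≡ a (mod d + 1)` whenever `1 ≤ a ≤ b ≤ d + 1`.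
Hence `fP d b m ≤ fP d a m`, and the two convolutions compare term by term.
-/

theorem le_perim_of_mem {M : Multiset ℕ} {x : ℕ} (hx : x ∈ M) : x ≤ perim M := by
  have hsup : x ≤ M.sup := Multiset.le_sup hx
  have hcard : 0 < M.card := Multiset.card_pos_iff_exists_mem.2 ⟨x, hx⟩
  unfold perim
  lia

theorem IsPartition.card_le_perim {M : Multiset ℕ} (hM : IsPartition M) : M.card ≤ perim M := by
  obtain ⟨x, hx⟩ := Multiset.exists_mem_of_ne_zero hM.1
  have hsup : 0 < M.sup := (hM.2 x hx).trans_le (Multiset.le_sup hx)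
  unfold perim
  lia

theorem finite_setOf_isPartition_perim_eq (n : ℕ) :
    {M : Multiset ℕ | IsPartition M ∧ perim M = n}.Finite := by
  refine (Set.finite_Iic (n • Multiset.range (n + 1))).subset ?_
  rintro M ⟨hM, rfl⟩
  refine Multiset.le_iff_count.2 fun x ↦ ?_
  by_cases hx : x ∈ M
  · have hrange : x ∈ Multiset.range (perim M + 1) :=
      Multiset.mem_range.2 (Nat.lt_succ_of_le (le_perim_of_mem hx))
    calc M.count x ≤ M.card := Multiset.count_le_card x M
      _ ≤ perim M := hM.card_le_perim
      _ = (perim M • Multiset.range (perim M + 1)).count x := by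
        rw [Multiset.count_nsmul,
          Multiset.count_eq_one_of_mem (Multiset.nodup_range _) hrange, mul_one]
  · exact (Multiset.count_eq_zero_of_notMem hx).trans_le (Nat.zero_le _)

theorem sup_map_tsub (M : Multiset ℕ) (s : ℕ) : (M.map (· - s)).sup = M.sup - s := by
  induction M using Multiset.induction_on with
  | empty => simp
  | cons x M ih => rw [Multiset.map_cons, Multiset.sup_cons, Multiset.sup_cons, ih,
      Nat.sub_max_sub_right]

/-- The multiset obtained from `M` by subtracting `s` from every part (truncated at `0`) and
adjoining `s` new parts equal to `a`: it trades size of the largest part for number of parts. -/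
def tradeParts (s a : ℕ) (M : Multiset ℕ) : Multiset ℕ :=
  M.map (· - s) + Multiset.replicate s a

theorem card_tradeParts (s a : ℕ) (M : Multiset ℕ) : (tradeParts s a M).card = M.card + s := by
  simp only [tradeParts, Multiset.card_add, Multiset.card_map, Multiset.card_replicate]

theorem sup_tradeParts {s a : ℕ} {M : Multiset ℕ} (h : a + s ≤ M.sup) :
    (tradeParts s a M).sup = M.sup - s := by
  have hreplicate : (Multiset.replicate s a).sup ≤ M.sup - s :=
    Multiset.sup_le.2 fun x hx ↦ Multiset.eq_of_mem_replicate hx ▸ Nat.le_sub_of_add_le h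
  rw [tradeParts, Multiset.sup_add, sup_map_tsub, sup_of_le_left hreplicate]

theorem perim_tradeParts {s a : ℕ} {M : Multiset ℕ} (h : a + s ≤ M.sup) :
    perim (tradeParts s a M) = perim M := by
  rw [perim, perim, sup_tradeParts h, card_tradeParts]
  lia

theorem forall_mem_tradeParts {s a : ℕ} {M : Multiset ℕ} {p : ℕ → Prop}
    (hM : ∀ x ∈ M, p (x - s)) (ha : p a) : ∀ x ∈ tradeParts s a M, p x := by
  intro x hx
  rcases Multiset.mem_add.1 hx with hx | hx
  · obtain ⟨y, hy, rfl⟩ := Multiset.mem_map.1 hx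
    exact hM y hy
  · exact Multiset.eq_of_mem_replicate hx ▸ ha

theorem isPartition_tradeParts {s a : ℕ} {M : Multiset ℕ} (hM : M ≠ 0) (ha : 0 < a)
    (hs : ∀ x ∈ M, s < x) : IsPartition (tradeParts s a M) := by
  refine ⟨?_, forall_mem_tradeParts (fun x hx ↦ Nat.sub_pos_of_lt (hs x hx)) ha⟩
  rw [← Multiset.card_pos, card_tradeParts]
  exact Nat.add_pos_left (Multiset.card_pos.2 hM) s

theorem tradeParts_injOn (s a : ℕ) : Set.InjOn (tradeParts s a) {M | ∀ x ∈ M, s ≤ x} := by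
  have map_add_map_tsub {M : Multiset ℕ} (hM : ∀ x ∈ M, s ≤ x) :
      (M.map (· - s)).map (· + s) = M := by
    rw [Multiset.map_map]
    exact (Multiset.map_congr rfl fun x hx ↦ Nat.sub_add_cancel (hM x hx)).trans M.map_id'
  intro M hM N hN h
  rw [← map_add_map_tsub hM, ← map_add_map_tsub hN, add_right_cancel h]

theorem le_of_modEq_of_pos {k b x : ℕ} (h : x ≡ b [MOD k]) (hx : 0 < x) (hb : b ≤ k) :
    b ≤ x := by
  by_contra! hlt
  have := h.add_le_of_lt hlt
  lia

theorem fP_antitoneOn (d n : ℕ) : AntitoneOn (fP d · n) (Set.Icc 1 (d + 1)) := by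
  rintro a ⟨ha, -⟩ b ⟨-, hb⟩ hab
  obtain ⟨s, rfl⟩ := Nat.exists_eq_add_of_le hab
  have le_part {M : Multiset ℕ} (hM : IsPartition M) (hmod : ∀ x ∈ M, x ≡ a + s [MOD d + 1]) :
      ∀ x ∈ M, a + s ≤ x := fun x hx ↦ le_of_modEq_of_pos (hmod x hx) (hM.2 x hx) hb
  refine Set.ncard_le_ncard_of_injOn (tradeParts s a) ?_ ?_
    ((finite_setOf_isPartition_perim_eq n).subset fun M hM ↦ ⟨hM.1, hM.2.1⟩)
  · rintro M ⟨hM, rfl, hmod⟩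
    have hle := le_part hM hmod
    obtain ⟨y, hy⟩ := Multiset.exists_mem_of_ne_zero hM.1
    have hsup : a + s ≤ M.sup := (hle y hy).trans (Multiset.le_sup hy)
    have hpart : IsPartition (tradeParts s a M) :=
      isPartition_tradeParts hM.1 ha fun x hx ↦ (Nat.lt_add_of_pos_left ha).trans_le (hle x hx)
    have hmod_trade : ∀ x ∈ tradeParts s a M, x ≡ a [MOD d + 1] :=
      forall_mem_tradeParts (fun x hx ↦ Nat.ModEq.add_right_cancel' s <|
        (Nat.sub_add_cancel (Nat.le_of_add_left_le (hle x hx))).symm ▸ hmod x hx) rfl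
    exact ⟨hpart, perim_tradeParts hsup, hmod_trade⟩
  · refine (tradeParts_injOn s a).mono ?_
    rintro M ⟨hM, -, hmod⟩ x hx
    exact Nat.le_of_add_left_le (le_part hM hmod x hx)

theorem stmt_4 (d a n : ℕ) (hd : 1 ≤ d) (hn : 1 ≤ n) (ha1 : 1 ≤ a) (ha2 : a ≤ d + 1) :
    ∑ m ∈ Finset.Icc 1 (n - 1), fP d a (n - m) * fP d (d + 1) m ≤
      ∑ m ∈ Finset.Icc 1 (n - 1), fP d a (n - m) * fP d 1 m := by
  refine Finset.sum_le_sum fun m _ ↦ Nat.mul_le_mul_left _ ?_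
  have hd1 : 1 ≤ d + 1 := Nat.le_add_left 1 d
  exact fP_antitoneOn d m ⟨le_rfl, hd1⟩ ⟨hd1, le_rfl⟩ hd1
end
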